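/- (Hardness near the Nashian regime, negative side.) For every ε ∈ (0,1) there exists n₀ ∈ ℕ such that for every n ≥ n₀, every real p with −ε/4 ≤ p < 0 and |p| ≥ (4/ε) · log(log n)/log n, and every deterministic online algorithm A for n agents, there exists an instance v with unit monopolist utilities, in which for every item k there is some w_k ≥ 0 with v k a ∈ {0, w_k} for all agents a, such that OPT_p(v) ≥ n^{(1−ε)·|p|} · ALG_{A,p}(v). -/

import Mathlib

open Real

/-- The `p`-mean welfare of a utility profile, taken to be `0` when `p < 0`
and some utility is zero. -/
noncomputable def pMeanWelfare (n : ℕ) (p : ℝ) (u : Fin n → ℝ) : ℝ :=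
  if p < 0 ∧ ∃ a, u a = 0 then 0
  else ((1 / (n : ℝ)) * ∑ a, u a ^ p) ^ (1 / p)

/-- The optimal `p`-mean welfare over all feasible (fractional) allocations. -/
noncomputable def OPTwelfare (n m : ℕ) (p : ℝ) (v : Fin m → Fin n → ℝ) : ℝ :=
  sSup { w : ℝ | ∃ y : Fin m → Fin n → ℝ,
    (∀ k a, 0 ≤ y k a) ∧ (∀ k, ∑ a, y k a ≤ 1) ∧
    w = pMeanWelfare n p (fun a => ∑ k, v k a * y k a) }

/-- The utilities produced by a deterministic online algorithm `A` on instance `v`: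
item `k` is allocated according to `A k` applied to the value history of items `0,…,k`. -/
noncomputable def onlineUtilities (n m : ℕ)
    (A : (k : ℕ) → (Fin (k + 1) → Fin n → ℝ) → (Fin n → ℝ))
    (v : Fin m → Fin n → ℝ) : Fin n → ℝ :=
  fun a => ∑ k : Fin m, v k a *
    A k.1 (fun i : Fin (k.1 + 1) => v (Fin.castLE k.isLt i)) a

/-- The `p`-mean welfare achieved by the online algorithm `A` on instance `v`. -/
noncomputable def ALGwelfare (n m : ℕ) (p : ℝ)
    (A : (k : ℕ) → (Fin (k + 1) → Fin n → ℝ) → (Fin n → ℝ))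
    (v : Fin m → Fin n → ℝ) : ℝ :=
  pMeanWelfare n p (onlineUtilities n m A v)

/-!
Write `q = |p|`. The first item is worth `1 - f` to everybody, where `f = s / n`. After seeing how
it is split, the adversary takes a set `S` of `s` agents who together received at most the share
`s / n` of it; then each agent outside `S` gets a private item of value `f`, while the agents of `S`
have to share a single further item of value `f`.

The agents of `S` end up with average utility at most `2 / n`, so by convexity of `u ↦ u ^ (-q)` the
mean of `u ^ (-q)` is at least `f (n / 2) ^ q`. In hindsight the first item can be split inside `S`
only, which gives at least `1 / (2 s)` to the agents of `S` and `f` to all others, hence a mean of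
at most `f ^ (-q) + f (2 s) ^ q`. As long as `f ^ (-q) ≤ q f s ^ q`, the first summand costs only a
factor `1 + q ≤ exp q`, and the two means differ by a factor of at least `(n / (4 e s)) ^ q`. So `s`
should be small, subject to that balance condition, and `s = ⌈n ^ (1 - (1 - 3 ε / 4) q)⌉` will do:
the lower bound on `|p|` says that `n ^ (ε q / 4) ≥ log n`, which absorbs all constants.
-/

open Finset

section Inequalities

lemma one_add_mul_sub_one_le_rpow_of_nonpos {x p : ℝ} (hx : 0 < x) (hp : p ≤ 0) :
    1 + p * (x - 1) ≤ x ^ p :=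
  calc 1 + p * (x - 1) ≤ 1 + p * log x := by
        gcongr 1 + ?_
        exact mul_le_mul_of_nonpos_left (log_le_sub_one_of_pos hx) hp
    _ ≤ exp (log x * p) := by linarith [add_one_le_exp (log x * p)]
    _ = x ^ p := (rpow_def_of_pos hx p).symm

lemma card_mul_rpow_le_sum_rpow {ι : Type*} {S : Finset ι} {u : ι → ℝ} {c p : ℝ} (hc : 0 < c)
    (hp : p ≤ 0) (hu : ∀ a ∈ S, 0 < u a) (hsum : ∑ a ∈ S, u a ≤ #S * c) :
    #S * c ^ p ≤ ∑ a ∈ S, u a ^ p := by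
  have hmean : (∑ a ∈ S, u a) / c - #S ≤ 0 := by rwa [sub_nonpos, div_le_iff₀ hc]
  calc #S * c ^ p ≤ c ^ p * (#S + p * ((∑ a ∈ S, u a) / c - #S)) := by
        rw [mul_comm]
        gcongr
        exact le_add_of_nonneg_right (mul_nonneg_of_nonpos_of_nonpos hp hmean)
    _ = ∑ a ∈ S, c ^ p * (1 + p * (u a / c - 1)) := by
        simp only [← mul_sum, sum_add_distrib, sum_sub_distrib, ← sum_div, sum_const,
          nsmul_eq_mul, mul_one]
    _ ≤ ∑ a ∈ S, c ^ p * (u a / c) ^ p := by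
        gcongr with a ha
        exact one_add_mul_sub_one_le_rpow_of_nonpos (div_pos (hu a ha) hc) hp
    _ = ∑ a ∈ S, u a ^ p := by
        refine sum_congr rfl fun a ha => ?_
        rw [← mul_rpow hc.le (div_pos (hu a ha) hc).le, mul_div_cancel₀ _ hc.ne']

lemma exists_subset_card_eq_sum_le_nsmul {ι M : Type*} [AddCommMonoid M] [LinearOrder M]
    [IsOrderedCancelAddMonoid M] {T : Finset ι} {x : ι → M} {c : M}
    (hT : ∑ a ∈ T, x a ≤ #T • c) {s : ℕ} (hs : s ≤ #T) :
    ∃ S ⊆ T, #S = s ∧ ∑ a ∈ S, x a ≤ s • c := by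
  classical
  induction hs using Nat.decreasingInduction with
  | self => exact ⟨T, Subset.rfl, rfl, hT⟩
  | of_succ s _ ih =>
    obtain ⟨S, hST, hcard, hsum⟩ := ih
    obtain ⟨a, haS, hmax⟩ := S.exists_max_image x (card_pos.mp (by lia))
    have hcard_erase : #(S.erase a) = s := by rw [card_erase_of_mem haS, hcard, Nat.add_sub_cancel]
    refine ⟨S.erase a, (erase_subset a S).trans hST, hcard_erase, ?_⟩
    rcases le_total c (x a) with hca | hac
    · rw [← sum_erase_add S x haS, succ_nsmul] at hsum
      exact le_of_add_le_add_right (hsum.trans (by gcongr))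
    · rw [← hcard_erase]
      exact sum_le_card_nsmul _ _ _ fun b hb => (hmax b (mem_of_mem_erase hb)).trans hac

lemma mul_rpow_one_div_le_rpow_one_div {K M N p : ℝ} (hK : 0 < K) (hM : 0 < M) (hp : p < 0)
    (h : K ^ (-p) * M ≤ N) : K * N ^ (1 / p) ≤ M ^ (1 / p) :=
  calc K * N ^ (1 / p) ≤ K * (K ^ (-p) * M) ^ (1 / p) := by
        gcongr 1
        exact rpow_le_rpow_of_nonpos (by positivity) h (one_div_neg.mpr hp).le
    _ = M ^ (1 / p) := by
        rw [mul_rpow (by positivity) hM.le, ← rpow_mul hK.le, neg_mul, mul_one_div_cancel hp.ne,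
          rpow_neg_one, mul_inv_cancel_left₀ hK.ne']

lemma log_le_rpow_of_log_log_div_log_le {x c : ℝ} (hx : 1 < x)
    (h : log (log x) / log x ≤ c) : log x ≤ x ^ c := by
  have hlog : 0 < log x := log_pos hx
  rw [rpow_def_of_pos (by linarith), ← log_le_iff_le_exp hlog, mul_comm]
  exact (div_le_iff₀ hlog).mp h

lemma one_le_mul_log_of_log_log_div_log_le {x c : ℝ} (hx : exp 1 ≤ log x)
    (h : log (log x) / log x ≤ c) : 1 ≤ c * log x := by
  have hlog : 0 < log x := (exp_pos 1).trans_le hx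
  exact ((le_log_iff_exp_le hlog).mpr hx).trans ((div_le_iff₀ hlog).mp h)

end Inequalities

section Welfare

variable {n : ℕ} {p : ℝ} {u : Fin n → ℝ}

lemma pMeanWelfare_of_pos (hu : ∀ a, 0 < u a) :
    pMeanWelfare n p u = ((1 / (n : ℝ)) * ∑ a, u a ^ p) ^ (1 / p) :=
  if_neg fun ⟨_, a, ha⟩ => (hu a).ne' ha

lemma pMeanWelfare_le_rpow {M : ℝ} (hp : p < 0) (hu : ∀ a, 0 ≤ u a) (hM : 0 < M)
    (h : (∀ a, 0 < u a) → M ≤ (1 / (n : ℝ)) * ∑ a, u a ^ p) :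
    pMeanWelfare n p u ≤ M ^ (1 / p) := by
  by_cases hpos : ∀ a, 0 < u a
  · rw [pMeanWelfare_of_pos hpos]
    exact rpow_le_rpow_of_nonpos hM (h hpos) (one_div_neg.mpr hp).le
  · obtain ⟨a, ha⟩ := not_forall.mp hpos
    rw [pMeanWelfare, if_pos ⟨hp, a, le_antisymm (not_lt.mp ha) (hu a)⟩]
    positivity

lemma pMeanWelfare_le_of_le {c : ℝ} (hn : 0 < n) (hp : p < 0) (hc : 0 < c)
    (hu : ∀ a, 0 ≤ u a) (huc : ∀ a, u a ≤ c) : pMeanWelfare n p u ≤ c := by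
  have hn' : (0 : ℝ) < n := Nat.cast_pos.mpr hn
  have hroot : (c ^ p) ^ (1 / p) = c := by rw [one_div, rpow_rpow_inv hc.le hp.ne]
  refine hroot ▸ pMeanWelfare_le_rpow hp hu (by positivity) fun hpos => ?_
  calc c ^ p = 1 / n * ∑ _a : Fin n, c ^ p := by simp [hn'.ne']
    _ ≤ 1 / n * ∑ a, u a ^ p := by
      gcongr 1 / (n : ℝ) * ∑ a, ?_ with a
      exact rpow_le_rpow_of_nonpos (hpos a) (huc a) hp.le

lemma pMeanWelfare_le_of_sum_le {S : Finset (Fin n)} {c : ℝ} (hp : p < 0) (hS : S.Nonempty)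
    (hc : 0 < c) (hu : ∀ a, 0 ≤ u a) (hsum : ∑ a ∈ S, u a ≤ #S * c) :
    pMeanWelfare n p u ≤ (#S / n * c ^ p) ^ (1 / p) := by
  have hn : (0 : ℝ) < n := Nat.cast_pos.mpr hS.choose.pos
  have : (0 : ℝ) < #S := Nat.cast_pos.mpr hS.card_pos
  refine pMeanWelfare_le_rpow hp hu (by positivity) fun hpos => ?_
  calc #S / n * c ^ p = 1 / n * (#S * c ^ p) := by ring
    _ ≤ 1 / n * ∑ a ∈ S, u a ^ p := by
      gcongr
      exact card_mul_rpow_le_sum_rpow hc hp.le (fun a _ => hpos a) hsum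
    _ ≤ 1 / n * ∑ a, u a ^ p := by
      gcongr 1 / (n : ℝ) * ?_
      exact sum_le_univ_sum_of_nonneg fun a => rpow_nonneg (hu a) p

lemma rpow_le_pMeanWelfare_of_le {S : Finset (Fin n)} {b c : ℝ} (hn : 0 < n) (hp : p < 0)
    (hb : 0 < b) (hc : 0 < c) (huc : ∀ a ∈ S, c ≤ u a) (hub : ∀ a ∉ S, b ≤ u a) :
    (b ^ p + #S / n * c ^ p) ^ (1 / p) ≤ pMeanWelfare n p u := by
  have : Nonempty (Fin n) := ⟨⟨0, hn⟩⟩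
  have : (0 : ℝ) < n := Nat.cast_pos.mpr hn
  have hpos : ∀ a, 0 < u a := fun a =>
    if ha : a ∈ S then hc.trans_le (huc a ha) else hb.trans_le (hub a ha)
  have hpoint : ∀ a, u a ^ p ≤ b ^ p + if a ∈ S then c ^ p else 0 := fun a => by
    split_ifs with ha
    · exact (rpow_le_rpow_of_nonpos hc (huc a ha) hp.le).trans
        (le_add_of_nonneg_left (rpow_nonneg hb.le p))
    · exact (rpow_le_rpow_of_nonpos hb (hub a ha) hp.le).trans (add_zero _).ge
  have hsum_pos : 0 < ∑ a, u a ^ p :=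
    sum_pos (fun a _ => rpow_pos_of_pos (hpos a) p) univ_nonempty
  rw [pMeanWelfare_of_pos hpos]
  refine rpow_le_rpow_of_nonpos (by positivity) ?_ (one_div_neg.mpr hp).le
  calc 1 / (n : ℝ) * ∑ a, u a ^ p
      ≤ 1 / n * ∑ a, (b ^ p + if a ∈ S then c ^ p else 0) := by gcongr with a; exact hpoint a
    _ = 1 / n * (n * b ^ p + #S * c ^ p) := by simp [sum_add_distrib]
    _ = b ^ p + #S / n * c ^ p := by field_simp

lemma pMeanWelfare_le_OPTwelfare {m : ℕ} {v y : Fin m → Fin n → ℝ} (hn : 0 < n) (hp : p < 0)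
    (hv : ∀ k a, 0 ≤ v k a) (hy : ∀ k a, 0 ≤ y k a) (hy_sum : ∀ k, ∑ a, y k a ≤ 1) :
    pMeanWelfare n p (fun a => ∑ k, v k a * y k a) ≤ OPTwelfare n m p v := by
  have htotal : 0 ≤ ∑ k, ∑ a, v k a := sum_nonneg fun k _ => sum_nonneg fun a _ => hv k a
  refine le_csSup ⟨1 + ∑ k, ∑ a, v k a, ?_⟩ ⟨y, hy, hy_sum, rfl⟩
  rintro w ⟨z, hz, hz_sum, rfl⟩
  refine pMeanWelfare_le_of_le hn hp (by linarith)
    (fun a => sum_nonneg fun k _ => mul_nonneg (hv k a) (hz k a)) fun a => ?_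
  calc ∑ k, v k a * z k a ≤ ∑ k, v k a := by
        gcongr with k
        exact mul_le_of_le_one_right (hv k a)
          ((single_le_sum (fun b _ => hz k b) (mem_univ a)).trans (hz_sum k))
    _ ≤ ∑ k, ∑ b, v k b := by
        gcongr with k
        exact single_le_sum (fun b _ => hv k b) (mem_univ a)
    _ ≤ 1 + ∑ k, ∑ b, v k b := by linarith

lemma onlineUtilities_nonneg {m : ℕ} {v : Fin m → Fin n → ℝ}
    {A : (k : ℕ) → (Fin (k + 1) → Fin n → ℝ) → (Fin n → ℝ)} (hv : ∀ k a, 0 ≤ v k a)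
    (hA : ∀ k h a, 0 ≤ A k h a) (a : Fin n) : 0 ≤ onlineUtilities n m A v a :=
  sum_nonneg fun k _ => mul_nonneg (hv k a) (hA _ _ a)

end Welfare

section TwoStageInstance

variable {n l : ℕ} {f : ℝ}

/-- The two-stage instance in which item `0` is worth `1 - f` to every agent and agent `a` values,
besides item `0`, only item `r a + 1`, at `f`. -/
def twoStageInstance (f : ℝ) (r : Fin n → Fin l) : Fin (l + 1) → Fin n → ℝ :=
  Fin.cons (fun _ => 1 - f) fun i a => if r a = i then f else 0

/-- The second-stage targets `r` of the adversary: the agents of `S` compete for item `0` of the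
second stage, and every agent `a ∉ S` has item `a + 1` of the second stage to itself. -/
def contestedTarget (S : Finset (Fin n)) (a : Fin n) : Fin (n + 1) :=
  if a ∈ S then 0 else a.succ

/-- The allocation chosen in hindsight for the targets `contestedTarget S`: the first item is split
equally among `S`, and item `a + 1` of the second stage goes to agent `a`. -/
noncomputable def hindsightAllocation (S : Finset (Fin n)) : Fin (n + 2) → Fin n → ℝ :=
  Fin.cons (fun a => if a ∈ S then (#S : ℝ)⁻¹ else 0) fun i a => if i = a.succ then 1 else 0

lemma twoStageInstance_nonneg (hf₀ : 0 ≤ f) (hf₁ : f ≤ 1) (r : Fin n → Fin l)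
    (k : Fin (l + 1)) (a : Fin n) : 0 ≤ twoStageInstance f r k a := by
  cases k using Fin.cases with
  | zero => simpa [twoStageInstance] using hf₁
  | succ i => simp only [twoStageInstance, Fin.cons_succ]; positivity

lemma twoStageInstance_eq_zero_or_eq (hf₀ : 0 ≤ f) (hf₁ : f ≤ 1) (r : Fin n → Fin l)
    (k : Fin (l + 1)) :
    ∃ w : ℝ, 0 ≤ w ∧ ∀ a, twoStageInstance f r k a = 0 ∨ twoStageInstance f r k a = w := by
  cases k using Fin.cases with
  | zero => exact ⟨1 - f, sub_nonneg.mpr hf₁, fun a => Or.inr rfl⟩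
  | succ i => exact ⟨f, hf₀, fun a => (ite_eq_or_eq (r a = i) f 0).symm⟩

lemma sum_twoStageInstance_mul (f : ℝ) (r : Fin n → Fin l) (z : Fin (l + 1) → ℝ) (a : Fin n) :
    ∑ k, twoStageInstance f r k a * z k = (1 - f) * z 0 + f * z (r a).succ := by
  simp [twoStageInstance, Fin.sum_univ_succ]

lemma sum_twoStageInstance (f : ℝ) (r : Fin n → Fin l) (a : Fin n) :
    ∑ k, twoStageInstance f r k a = 1 := by
  simpa using sum_twoStageInstance_mul f r 1 a

lemma sum_hindsightAllocation_le_one (S : Finset (Fin n)) (k : Fin (n + 2)) :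
    ∑ a, hindsightAllocation S k a ≤ 1 := by
  refine Fin.cases ?_ (Fin.cases ?_ fun a => ?_) k
  · simpa [hindsightAllocation] using mul_inv_le_one
  · simp [hindsightAllocation, (Fin.succ_ne_zero _).symm]
  · simp [hindsightAllocation]

lemma hindsightAllocation_nonneg (S : Finset (Fin n)) (k : Fin (n + 2)) (a : Fin n) :
    0 ≤ hindsightAllocation S k a := by
  cases k using Fin.cases <;> simp only [hindsightAllocation, Fin.cons_zero, Fin.cons_succ] <;>
    positivity

lemma rpow_le_OPTwelfare_twoStageInstance {S : Finset (Fin n)} {p : ℝ} (hp : p < 0)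
    (hS : S.Nonempty) (hf₀ : 0 < f) (hf : f ≤ 1 / 2) :
    (f ^ p + #S / n * (2 * #S : ℝ)⁻¹ ^ p) ^ (1 / p) ≤
      OPTwelfare n (n + 2) p (twoStageInstance f (contestedTarget S)) := by
  have hn : 0 < n := hS.choose.pos
  have : (0 : ℝ) < #S := Nat.cast_pos.mpr hS.card_pos
  refine (rpow_le_pMeanWelfare_of_le hn hp hf₀ (by positivity) ?_ ?_).trans
    (pMeanWelfare_le_OPTwelfare hn hp (twoStageInstance_nonneg hf₀.le (by linarith) _)
      (hindsightAllocation_nonneg S) (sum_hindsightAllocation_le_one S)) <;>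
    intro a ha <;>
    rw [sum_twoStageInstance_mul f _ (hindsightAllocation S · a)]
  · have hutility : (1 - f) * hindsightAllocation S 0 a +
        f * hindsightAllocation S (contestedTarget S a).succ a = (1 - f) * (#S : ℝ)⁻¹ := by
      simp [hindsightAllocation, contestedTarget, ha, (Fin.succ_ne_zero _).symm]
    rw [hutility, mul_inv]
    gcongr
    linarith
  · simp [hindsightAllocation, contestedTarget, ha]

variable {A : (k : ℕ) → (Fin (k + 1) → Fin n → ℝ) → (Fin n → ℝ)}

lemma onlineUtilities_twoStageInstance (f : ℝ) (r : Fin n → Fin l) (a : Fin n) :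
    onlineUtilities n (l + 1) A (twoStageInstance f r) a =
      (1 - f) * A 0 (fun _ _ => 1 - f) a +
        f * A (r a + 1) (fun i => twoStageInstance f r (Fin.castLE (r a).succ.isLt i)) a := by
  have hhistory : (fun i : Fin 1 => twoStageInstance f r (Fin.castLE (Nat.succ_pos l) i)) =
      fun _ _ => 1 - f := by
    funext i
    rw [Subsingleton.elim i 0]
    rfl
  rw [← hhistory]
  exact sum_twoStageInstance_mul f r
    (fun k => A k (fun i => twoStageInstance f r (Fin.castLE k.isLt i)) a) a

lemma sum_onlineUtilities_twoStageInstance_le {r : Fin n → Fin l} {S : Finset (Fin n)} {j : Fin l}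
    (hA : ∀ k h, (∀ a, 0 ≤ A k h a) ∧ ∑ a, A k h a ≤ 1) (hf₀ : 0 ≤ f) (hr : ∀ a ∈ S, r a = j) :
    ∑ a ∈ S, onlineUtilities n (l + 1) A (twoStageInstance f r) a ≤
      ∑ a ∈ S, A 0 (fun _ _ => 1 - f) a + f := by
  set x := A 0 fun _ _ => 1 - f
  set z := A (j + 1) fun i => twoStageInstance f r (Fin.castLE j.succ.isLt i)
  calc ∑ a ∈ S, onlineUtilities n (l + 1) A (twoStageInstance f r) a
      = ∑ a ∈ S, ((1 - f) * x a + f * z a) :=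
        sum_congr rfl fun a ha => by rw [onlineUtilities_twoStageInstance, hr a ha]
    _ = (1 - f) * ∑ a ∈ S, x a + f * ∑ a ∈ S, z a := by
        rw [sum_add_distrib, mul_sum, mul_sum]
    _ ≤ 1 * ∑ a ∈ S, x a + f * 1 := by
        gcongr
        · exact sum_nonneg fun a _ => (hA _ _).1 a
        · linarith
        · exact (sum_le_univ_sum_of_nonneg (hA _ _).1).trans (hA _ _).2
    _ = ∑ a ∈ S, x a + f := by rw [one_mul, mul_one]

lemma ALGwelfare_twoStageInstance_le {S : Finset (Fin n)} {c p : ℝ} (hp : p < 0)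
    (hS : S.Nonempty) (hc : 0 < c) (hf₀ : 0 ≤ f) (hf₁ : f ≤ 1)
    (hA : ∀ k h, (∀ a, 0 ≤ A k h a) ∧ ∑ a, A k h a ≤ 1)
    (hlow : ∑ a ∈ S, A 0 (fun _ _ => 1 - f) a + f ≤ #S * c) :
    ALGwelfare n (n + 2) p A (twoStageInstance f (contestedTarget S)) ≤
      (#S / n * c ^ p) ^ (1 / p) :=
  pMeanWelfare_le_of_sum_le hp hS hc
    (onlineUtilities_nonneg (twoStageInstance_nonneg hf₀ hf₁ _) fun k h => (hA k h).1)
    ((sum_onlineUtilities_twoStageInstance_le hA hf₀ fun _ ha => if_pos ha).trans hlow)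

end TwoStageInstance

section Gap

lemma rpow_mul_hindsight_mean_le {n s K q : ℝ} (hn : 0 < n) (hs : 0 < s) (hK : 0 < K) (hq : 0 < q)
    (hsize : 4 * exp 1 * K * s ≤ n) (hbalance : (s / n) ^ (-q) ≤ q * (s / n * s ^ q)) :
    K ^ q * ((s / n) ^ (-q) + s / n * (2 * s)⁻¹ ^ (-q)) ≤ s / n * (2 / n) ^ (-q) := by
  rw [rpow_neg_eq_inv_rpow (2 * s)⁻¹, rpow_neg_eq_inv_rpow (2 / n), inv_inv, inv_div]
  calc K ^ q * ((s / n) ^ (-q) + s / n * (2 * s) ^ q)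
      ≤ K ^ q * (q * (s / n * (2 * s) ^ q) + s / n * (2 * s) ^ q) := by
        gcongr
        refine hbalance.trans ?_
        gcongr
        linarith
    _ = s / n * ((q + 1) * (K ^ q * (2 * s) ^ q)) := by ring
    _ ≤ s / n * (exp q * (K ^ q * (2 * s) ^ q)) := by gcongr; exact add_one_le_exp q
    _ = s / n * (exp 1 * (K * (2 * s))) ^ q := by
        rw [mul_rpow (exp_pos 1).le (by positivity), mul_rpow hK.le (by positivity), exp_one_rpow]
    _ ≤ s / n * (n / 2) ^ q := by gcongr; linarith

theorem exists_mul_ALGwelfare_le_OPTwelfare {n s : ℕ} {K q : ℝ}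
    {A : (k : ℕ) → (Fin (k + 1) → Fin n → ℝ) → (Fin n → ℝ)}
    (hA : ∀ k h, (∀ a, 0 ≤ A k h a) ∧ ∑ a, A k h a ≤ 1)
    (hs : 0 < s) (hsn : 2 * s ≤ n) (hK : 0 < K) (hq : 0 < q)
    (hsize : 4 * exp 1 * K * s ≤ n) (hbalance : (s / n : ℝ) ^ (-q) ≤ q * (s / n * (s : ℝ) ^ q)) :
    ∃ S : Finset (Fin n),
      K * ALGwelfare n (n + 2) (-q) A (twoStageInstance (s / n) (contestedTarget S)) ≤
        OPTwelfare n (n + 2) (-q) (twoStageInstance (s / n) (contestedTarget S)) := by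
  have hn : (0 : ℝ) < n := Nat.cast_pos.mpr (by lia)
  have hs' : (0 : ℝ) < s := Nat.cast_pos.mpr hs
  have hf : (s / n : ℝ) ≤ 1 / 2 := by
    rw [div_le_div_iff₀ hn two_pos]
    exact_mod_cast (by lia : s * 2 ≤ 1 * n)
  have hfirst : ∑ a, A 0 (fun _ _ => 1 - (s / n : ℝ)) a ≤
      #(univ : Finset (Fin n)) • (1 / n : ℝ) := by
    rw [card_fin, nsmul_eq_mul, mul_one_div_cancel hn.ne']
    exact (hA _ _).2
  obtain ⟨S, -, rfl, hlow⟩ :=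
    exists_subset_card_eq_sum_le_nsmul hfirst (s := s) (by rw [card_fin]; lia)
  have hlow' : ∑ a ∈ S, A 0 (fun _ _ => 1 - (#S / n : ℝ)) a + #S / n ≤ #S * (2 / n) := by
    rw [nsmul_eq_mul] at hlow
    linear_combination hlow
  have hALG := ALGwelfare_twoStageInstance_le (neg_neg_of_pos hq) (card_pos.mp hs) (by positivity)
    (by positivity) (by linarith) hA hlow'
  refine ⟨S, (mul_le_mul_of_nonneg_left hALG hK.le).trans ?_⟩
  refine (mul_rpow_one_div_le_rpow_one_div hK (by positivity) (neg_neg_of_pos hq) ?_).trans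
    (rpow_le_OPTwelfare_twoStageInstance (neg_neg_of_pos hq) (card_pos.mp hs) (by positivity) hf)
  rw [neg_neg]
  exact rpow_mul_hindsight_mean_le hn hs' hK hq hsize hbalance

end Gap

section ContestedSize

variable {ε q : ℝ}

lemma four_mul_exp_one_mul_rpow_mul_le_of_le {n s : ℝ} (hn : 0 < n) (hconst : 24 ≤ n ^ (ε / 4 * q))
    (hs : s ≤ 2 * n ^ (1 - (1 - 3 * ε / 4) * q)) :
    4 * exp 1 * n ^ ((1 - ε) * q) * s ≤ n := by
  have he : exp 1 < 3 := exp_one_lt_three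
  calc 4 * exp 1 * n ^ ((1 - ε) * q) * s
      ≤ 4 * exp 1 * n ^ ((1 - ε) * q) * (2 * n ^ (1 - (1 - 3 * ε / 4) * q)) := by gcongr
    _ ≤ 4 * 3 * n ^ ((1 - ε) * q) * (2 * n ^ (1 - (1 - 3 * ε / 4) * q)) := by gcongr
    _ = 24 * (n ^ ((1 - ε) * q) * n ^ (1 - (1 - 3 * ε / 4) * q)) := by ring
    _ ≤ n ^ (ε / 4 * q) * (n ^ ((1 - ε) * q) * n ^ (1 - (1 - 3 * ε / 4) * q)) := by gcongr
    _ = n := by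
      rw [← rpow_add hn, ← rpow_add hn]
      ring_nf
      exact rpow_one n

lemma div_rpow_neg_le_of_rpow_le {n s : ℝ} (hn : 1 ≤ n) (hε : 0 ≤ ε) (hq : 0 < q) (hqε : q ≤ ε / 4)
    (hlow : 1 ≤ q * n ^ (ε / 4 * q)) (hs : n ^ (1 - (1 - 3 * ε / 4) * q) ≤ s) :
    (s / n) ^ (-q) ≤ q * (s / n * s ^ q) := by
  have hn₀ : 0 < n := by linarith
  set θ : ℝ := (1 - 3 * ε / 4) * q with hθ
  have hs₀ : 0 ≤ s := (rpow_nonneg hn₀.le _).trans hs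
  have hf : n ^ (-θ) ≤ s / n := by
    rw [le_div_iff₀ hn₀, ← rpow_add_one hn₀.ne', neg_add_eq_sub]
    exact hs
  have hθε : θ ≤ ε / 4 := by linarith [mul_nonneg hε hq.le]
  have hexponent : θ * q + ε / 4 * q ≤ -θ + (1 - θ) * q := by
    linear_combination 2 * q * hθε + hθ
  calc (s / n) ^ (-q) ≤ (n ^ (-θ)) ^ (-q) :=
        rpow_le_rpow_of_nonpos (by positivity) hf (neg_nonpos.mpr hq.le)
    _ = n ^ (θ * q) := by rw [← rpow_mul hn₀.le, neg_mul_neg]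
    _ ≤ q * n ^ (ε / 4 * q) * n ^ (θ * q) := le_mul_of_one_le_left (by positivity) hlow
    _ = q * n ^ (θ * q + ε / 4 * q) := by rw [rpow_add hn₀]; ring
    _ ≤ q * n ^ (-θ + (1 - θ) * q) := by gcongr
    _ = q * (n ^ (-θ) * (n ^ (1 - θ)) ^ q) := by rw [rpow_add hn₀, rpow_mul hn₀.le]
    _ ≤ q * (s / n * s ^ q) := by gcongr

lemma exists_contested_size {n : ℕ} (hn : exp 24 ≤ n) (hε : ε ≤ 1) (hq : 0 < q)
    (hqε : q ≤ ε / 4) (hratio : log (log n) / log n ≤ ε / 4 * q) :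
    ∃ s : ℕ, 0 < s ∧ 2 * s ≤ n ∧ 4 * exp 1 * (n : ℝ) ^ ((1 - ε) * q) * s ≤ n ∧
      (s / n : ℝ) ^ (-q) ≤ q * (s / n * (s : ℝ) ^ q) := by
  have hn1 : (1 : ℝ) < n := (one_lt_exp_iff.mpr (by norm_num)).trans_le hn
  have hlogn : 24 ≤ log n := (le_log_iff_exp_le (by linarith)).mpr hn
  have hpow : log n ≤ (n : ℝ) ^ (ε / 4 * q) := log_le_rpow_of_log_log_div_log_le hn1 hratio
  have hlow : 1 ≤ q * (n : ℝ) ^ (ε / 4 * q) :=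
    calc 1 ≤ ε / 4 * q * log n :=
          one_le_mul_log_of_log_log_div_log_le (by linarith [exp_one_lt_three]) hratio
      _ ≤ q * (n : ℝ) ^ (ε / 4 * q) := by
          gcongr
          exact mul_le_of_le_one_left hq.le (by linarith)
  set x : ℝ := (n : ℝ) ^ (1 - (1 - 3 * ε / 4) * q)
  have hx : 1 ≤ x := one_le_rpow hn1.le (by nlinarith)
  have hsize : 4 * exp 1 * (n : ℝ) ^ ((1 - ε) * q) * ⌈x⌉₊ ≤ n :=
    four_mul_exp_one_mul_rpow_mul_le_of_le (by linarith) (hlogn.trans hpow)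
      (by linarith [Nat.ceil_lt_add_one (zero_le_one.trans hx)])
  have htwo : (2 * ⌈x⌉₊ : ℝ) ≤ n := by
    refine le_trans ?_ hsize
    gcongr
    have hK : 1 ≤ (n : ℝ) ^ ((1 - ε) * q) := one_le_rpow hn1.le (by nlinarith)
    have he : 1 ≤ exp 1 := one_le_exp zero_le_one
    nlinarith
  exact ⟨⌈x⌉₊, Nat.ceil_pos.mpr (by linarith), by exact_mod_cast htwo, hsize,
    div_rpow_neg_le_of_rpow_le hn1.le (by linarith) hq hqε hlow (Nat.le_ceil x)⟩

end ContestedSize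

theorem stmt_16 :
    ∀ ε : ℝ, 0 < ε → ε < 1 →
    ∃ n₀ : ℕ, ∀ n : ℕ, n₀ ≤ n →
    ∀ p : ℝ, -ε / 4 ≤ p → p < 0 →
      (4 / ε) * (Real.log (Real.log n) / Real.log n) ≤ |p| →
    ∀ A : (k : ℕ) → (Fin (k + 1) → Fin n → ℝ) → (Fin n → ℝ),
      (∀ k h, (∀ a, 0 ≤ A k h a) ∧ ∑ a, A k h a ≤ 1) →
      ∃ m : ℕ, ∃ v : Fin m → Fin n → ℝ,
        (∀ k a, 0 ≤ v k a) ∧ (∀ a, ∑ k, v k a = 1) ∧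
        (∀ k, ∃ w : ℝ, 0 ≤ w ∧ ∀ a, v k a = 0 ∨ v k a = w) ∧
        OPTwelfare n m p v ≥
          (n : ℝ) ^ ((1 - ε) * |p|) * ALGwelfare n m p A v := by
  intro ε hε hε1
  refine ⟨⌈exp 24⌉₊, fun n hn p hpε hp hlog A hA => ?_⟩
  obtain ⟨q, rfl⟩ : ∃ q, p = -q := ⟨-p, (neg_neg p).symm⟩
  have hq : 0 < q := neg_neg_iff_pos.mp hp
  rw [abs_neg, abs_of_pos hq] at hlog ⊢
  have hratio : log (log n) / log n ≤ ε / 4 * q := by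
    rw [← inv_div 4 ε]
    exact (le_inv_mul_iff₀ (by positivity)).mpr hlog
  obtain ⟨s, hs, hsn, hsize, hbalance⟩ :=
    exists_contested_size (Nat.ceil_le.mp hn) hε1.le hq (by linarith) hratio
  have hn0 : (0 : ℝ) < n := Nat.cast_pos.mpr (by lia)
  obtain ⟨S, hgap⟩ :=
    exists_mul_ALGwelfare_le_OPTwelfare hA hs hsn (by positivity) hq hsize hbalance
  have hf : (s / n : ℝ) ≤ 1 := (div_le_one hn0).mpr (by exact_mod_cast (by lia : s ≤ n))
  exact ⟨n + 2, _, twoStageInstance_nonneg (by positivity) hf _, sum_twoStageInstance _ _,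
    twoStageInstance_eq_zero_or_eq (by positivity) hf _, hgap⟩
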